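/- Let n ≥ 2 and p > n. Let {f₁,…,f_N} be contracting similarities of ℝⁿ, each of ratio d ∈ (0,1), satisfying the strong separation condition on a bounded open set Q, and let {g₁,…,g_N} be similarities of ℝⁿ, each of ratio t ∈ (0,1). Let Φ : ℝⁿ → ℝⁿ be a homeomorphism that is differentiable almost everywhere and satisfies Φ(fᵢ(x)) = gᵢ(Φ(x)) for every i and every x in the closure of Q. Suppose that C := ∫_{closure(Q) \ ⋃ᵢ fᵢ(Q)} ‖DΦ(x)‖^p dx < ∞ and that N t^p d^{n−p} < 1. Then ∫_{closure(Q)} ‖DΦ(x)‖^p dx ≤ C · Σ_{l=0}^{∞} (N t^p d^{n−p})^l = C/(1 − N t^p d^{n−p}) < ∞. -/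

import Mathlib

open Set Metric Filter MeasureTheory
open scoped ENNReal Topology NNReal

noncomputable section

/-- `L_Φ(x,r) = sup {|Φ(x) - Φ(y)| : y ∈ Ω, |x - y| ≤ r}`. -/
noncomputable def linDil {X : Type*} [MetricSpace X] (Ω : Set X) (Φ : X → X) (x : X) (r : ℝ) :
    ℝ≥0∞ :=
  ⨆ y ∈ {y | y ∈ Ω ∧ dist x y ≤ r}, edist (Φ x) (Φ y)

/-- `l_Φ(x,r) = inf {|Φ(x) - Φ(y)| : y ∈ Ω, |x - y| ≥ r}`. -/
noncomputable def linCon {X : Type*} [MetricSpace X] (Ω : Set X) (Φ : X → X) (x : X) (r : ℝ) :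
    ℝ≥0∞ :=
  ⨅ y ∈ {y | y ∈ Ω ∧ r ≤ dist x y}, edist (Φ x) (Φ y)

/-- `H_Φ(x) = limsup_{r → 0⁺} L_Φ(x,r) / l_Φ(x,r)`. -/
noncomputable def qcH {X : Type*} [MetricSpace X] (Ω : Set X) (Φ : X → X) (x : X) : ℝ≥0∞ :=
  Filter.limsup (fun r : ℝ => linDil Ω Φ x r / linCon Ω Φ x r) (𝓝[>] (0 : ℝ))

/-- A map `Φ`, viewed as a map of `Ω` into `X`, is quasiconformal if `H_Φ(x) ≤ H` for all
`x ∈ Ω`, for some finite `H ≥ 1`. -/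
def QuasiconformalOn {X : Type*} [MetricSpace X] (Ω : Set X) (Φ : X → X) : Prop :=
  ∃ H : ℝ, 1 ≤ H ∧ ∀ x ∈ Ω, qcH Ω Φ x ≤ ENNReal.ofReal H

/-- `Φ` restricts to a homeomorphism of `Ω` onto `Ω'`. -/
def IsHomeoOn {X : Type*} [TopologicalSpace X] (Φ : X → X) (Ω Ω' : Set X) : Prop :=
  ∃ e : Ω ≃ₜ Ω', ∀ x : Ω, (e x : X) = Φ (x : X)

/-- `f` is a similarity with ratio `r`. -/
def IsSimilarityWith {X : Type*} [MetricSpace X] (r : ℝ) (f : X → X) : Prop :=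
  0 < r ∧ ∀ x y, dist (f x) (f y) = r * dist x y

/-- The strong separation condition for the iterated function system `f` on the set `Q`:
each `f i` maps the closure of `Q` into `Q`, and the images of the closure of `Q` are
pairwise disjoint. -/
def StrongSeparation {X : Type*} [MetricSpace X] {ι : Type*} (f : ι → X → X) (Q : Set X) :
    Prop :=
  (∀ i, f i '' closure Q ⊆ Q) ∧
    ∀ i j, i ≠ j → Disjoint (f i '' closure Q) (f j '' closure Q)

/-- `f_σ = f_{σ₁} ∘ ⋯ ∘ f_{σ_k}` for a finite word `σ`. -/
def iterComp {X ι : Type*} (f : ι → X → X) : List ι → X → X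
  | [] => id
  | i :: w => f i ∘ iterComp f w

/-- The invariant set `K = ⋂_k ⋃_{|σ| = k} f_σ(closure Q)` of an iterated function system. -/
def invariantSet {X : Type*} [MetricSpace X] {ι : Type*} (f : ι → X → X) (Q : Set X) :
    Set X :=
  ⋂ k : ℕ, ⋃ w : Fin k → ι, iterComp f (List.ofFn w) '' closure Q

/-- The distance between two subsets of a metric space. -/
noncomputable def setDist {X : Type*} [MetricSpace X] (A B : Set X) : ℝ :=
  sInf ((fun p : X × X => dist p.1 p.2) '' A ×ˢ B)

end

/-! Write `H S = ⋃ i, f i '' S`. Pushing a set `S ⊆ Q` forward by `H` multiplies `∫_S ‖DΦ‖ᵖ` by at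
most `q = N tᵖ d^{n-p}`: the chain rule gives `‖DΦ (f i x)‖ = (t / d) ‖DΦ x‖`, while volumes scale
by `dⁿ`. The ring `H^k Q \ H^{k+1} Q` therefore contributes at most `C qᵏ`. The rings exhaust `Q` up
to `⋂ k, H^k Q`, which is null: as `Q` is not clopen, `H (closure Q)` misses a nonempty open part of
`Q`, hence `N dⁿ < 1`. The scaling is only available on the open set `Q`, because the conjugacy on
`closure Q` says nothing about `DΦ` at boundary points; this is why `∂Q` is absorbed in `C`. -/

theorem IsSimilarityWith.isClosedEmbedding {X : Type*} [MetricSpace X] [CompleteSpace X] {r : ℝ}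
    {f : X → X} (hf : IsSimilarityWith r f) :
    Topology.IsClosedEmbedding f :=
  Dilation.isClosedEmbedding
    (Dilation.mkOfDistEq f ⟨⟨r, hf.1.le⟩, fun h => hf.1.ne' (congrArg NNReal.toReal h), hf.2⟩)

section Derivative

variable {E F : Type*} [NormedAddCommGroup E] [NormedSpace ℝ E] [StrictConvexSpace ℝ E]
  [NormedAddCommGroup F] [NormedSpace ℝ F] {r : ℝ} {f : E → E}

theorem IsSimilarityWith.exists_linearIsometry (hf : IsSimilarityWith r f) :
    ∃ (A : E →ₗᵢ[ℝ] E) (c : E), f = fun x => r • A x + c := by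
  have hr : r ≠ 0 := hf.1.ne'
  have hiso : Isometry fun x => r⁻¹ • f x := Isometry.of_dist_eq fun x y => by
    rw [dist_smul₀, hf.2, norm_inv, Real.norm_of_nonneg hf.1.le, inv_mul_cancel_left₀ hr]
  let A := hiso.affineIsometryOfStrictConvexSpace
  refine ⟨A.linearIsometry, f 0, funext fun x => ?_⟩
  have hA : r⁻¹ • f x = A.linearIsometry x + r⁻¹ • f 0 := by
    simpa [A] using hiso.affineIsometryOfStrictConvexSpace.map_vadd 0 x
  rw [← smul_inv_smul₀ hr (f x), hA, smul_add, smul_inv_smul₀ hr]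

theorem IsSimilarityWith.exists_linearIsometryEquiv [FiniteDimensional ℝ E]
    (hf : IsSimilarityWith r f) :
    ∃ (A : E ≃ₗᵢ[ℝ] E) (c : E), f = fun x => r • A x + c :=
  let ⟨A, c, h⟩ := hf.exists_linearIsometry
  ⟨A.toLinearIsometryEquiv rfl, c, h⟩

theorem IsSimilarityWith.norm_fderiv_comp_left {Φ : F → E} {x : F} (hf : IsSimilarityWith r f)
    (hΦ : DifferentiableAt ℝ Φ x) : ‖fderiv ℝ (f ∘ Φ) x‖ = r * ‖fderiv ℝ Φ x‖ := by
  obtain ⟨A, c, rfl⟩ := hf.exists_linearIsometry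
  have hderiv : HasFDerivAt ((fun y => r • A y + c) ∘ Φ)
      (r • A.toContinuousLinearMap.comp (fderiv ℝ Φ x)) x :=
    ((A.toContinuousLinearMap.hasFDerivAt.comp x hΦ.hasFDerivAt).const_smul r).add_const c
  rw [hderiv.fderiv, norm_smul, A.norm_toContinuousLinearMap_comp, Real.norm_of_nonneg hf.1.le]

theorem IsSimilarityWith.norm_fderiv_comp_right [FiniteDimensional ℝ E] {Φ : E → F}
    (hf : IsSimilarityWith r f) (x : E) :
    ‖fderiv ℝ (Φ ∘ f) x‖ = r * ‖fderiv ℝ Φ (f x)‖ := by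
  obtain ⟨A, c, rfl⟩ := hf.exists_linearIsometryEquiv
  let L : E ≃L[ℝ] E := A.toContinuousLinearEquiv.trans (.smulLeft (Units.mk0 r hf.1.ne'))
  have hL : (L : E →L[ℝ] E) = r • (A : E →L[ℝ] E) := rfl
  calc ‖fderiv ℝ ((fun y => Φ (y + c)) ∘ L) x‖
      = ‖(fderiv ℝ Φ (L x + c)).comp (L : E →L[ℝ] E)‖ := by
        rw [L.comp_right_fderiv, fderiv_comp_add_right]
    _ = r * ‖fderiv ℝ Φ (r • A x + c)‖ := by
        rw [hL, ContinuousLinearMap.comp_smul, norm_smul, Real.norm_of_nonneg hf.1.le,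
          ContinuousLinearMap.opNorm_comp_linearIsometryEquiv]
        rfl

theorem norm_fderiv_of_conj_similarity [FiniteDimensional ℝ E] [StrictConvexSpace ℝ F] {d t : ℝ}
    {g : F → F} {Φ : E → F} {x : E} (hf : IsSimilarityWith d f)
    (hg : IsSimilarityWith t g) (hconj : Φ ∘ f =ᶠ[𝓝 x] g ∘ Φ) (hΦ : DifferentiableAt ℝ Φ x) :
    ‖fderiv ℝ Φ (f x)‖ = t / d * ‖fderiv ℝ Φ x‖ := by
  have hd : d ≠ 0 := hf.1.ne'
  have hchain : d * ‖fderiv ℝ Φ (f x)‖ = t * ‖fderiv ℝ Φ x‖ := by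
    rw [← hf.norm_fderiv_comp_right, hconj.fderiv_eq, hg.norm_fderiv_comp_left hΦ]
  rw [div_mul_eq_mul_div, eq_div_iff hd, mul_comm, hchain]

end Derivative

section Volume

variable {E : Type*} [NormedAddCommGroup E] [NormedSpace ℝ E] [FiniteDimensional ℝ E]

theorem abs_det_linearIsometryEquiv (A : E ≃ₗᵢ[ℝ] E) :
    |(A : E →L[ℝ] E).det| = 1 := by
  borelize E
  let μ : Measure E := Measure.addHaar
  have hball : ENNReal.ofReal |(A : E →L[ℝ] E).det| * μ (ball 0 1) = 1 * μ (ball 0 1) := by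
    have himage : (A : E →L[ℝ] E) '' ball 0 1 = ball 0 1 := by simp
    rw [← μ.addHaar_image_continuousLinearMap, himage, one_mul]
  have hdet := (ENNReal.mul_left_inj (measure_ball_pos μ 0 one_pos).ne' measure_ball_lt_top.ne).1
    hball
  simpa using hdet

variable [StrictConvexSpace ℝ E] [MeasurableSpace E] [BorelSpace E] {μ : Measure E}
  [μ.IsAddHaarMeasure] {r : ℝ} {f : E → E} {S : Set E}

theorem IsSimilarityWith.setLIntegral_image (hf : IsSimilarityWith r f) (hS : MeasurableSet S)
    (G : E → ℝ≥0∞) :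
    ∫⁻ x in f '' S, G x ∂μ = ENNReal.ofReal (r ^ Module.finrank ℝ E) * ∫⁻ x in S, G (f x) ∂μ := by
  obtain ⟨A, c, hA⟩ := hf.exists_linearIsometryEquiv
  have hderiv (x : E) : HasFDerivAt f (r • (A : E →L[ℝ] E)) x :=
    hA ▸ (A.toContinuousLinearEquiv.hasFDerivAt.const_smul r).add_const c
  have hdet : |(r • (A : E →L[ℝ] E)).det| = r ^ Module.finrank ℝ E := by
    rw [ContinuousLinearMap.det, ContinuousLinearMap.toLinearMap_smul, LinearMap.det_smul, abs_mul,
      ← ContinuousLinearMap.det, abs_det_linearIsometryEquiv, mul_one, abs_of_pos (pow_pos hf.1 _)]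
  rw [lintegral_image_eq_lintegral_abs_det_fderiv_mul μ hS
    (fun x _ => (hderiv x).hasFDerivWithinAt) hf.isClosedEmbedding.injective.injOn]
  simp only [hdet]
  exact lintegral_const_mul' _ _ ENNReal.ofReal_ne_top

theorem IsSimilarityWith.measure_image (hf : IsSimilarityWith r f) (hS : MeasurableSet S) :
    μ (f '' S) = ENNReal.ofReal (r ^ Module.finrank ℝ E) * μ S := by
  simpa using hf.setLIntegral_image (μ := μ) hS 1

theorem setLIntegral_image_enorm_fderiv_rpow {F : Type*} [NormedAddCommGroup F] [NormedSpace ℝ F]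
    [StrictConvexSpace ℝ F] {d t : ℝ} {g : F → F} {Φ : E → F} {Q : Set E}
    (hf : IsSimilarityWith d f) (hg : IsSimilarityWith t g) (hQ : IsOpen Q)
    (hconj : ∀ x ∈ Q, Φ (f x) = g (Φ x))
    (hΦ : ∀ᵐ x ∂μ, DifferentiableAt ℝ Φ x) (p : ℝ) (hS : MeasurableSet S) (hSQ : S ⊆ Q) :
    ∫⁻ x in f '' S, ‖fderiv ℝ Φ x‖ₑ ^ p ∂μ =
      ENNReal.ofReal (t ^ p * d ^ (Module.finrank ℝ E - p)) *
        ∫⁻ x in S, ‖fderiv ℝ Φ x‖ₑ ^ p ∂μ := by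
  have hratio : 0 < t / d := div_pos hg.1 hf.1
  have hpoint : ∀ᵐ x ∂μ, x ∈ S →
      ‖fderiv ℝ Φ (f x)‖ₑ ^ p = ENNReal.ofReal ((t / d) ^ p) * ‖fderiv ℝ Φ x‖ₑ ^ p := by
    filter_upwards [hΦ] with x hx hxS
    have hnorm := norm_fderiv_of_conj_similarity hf hg
      (eventually_of_mem (hQ.mem_nhds (hSQ hxS)) hconj) hx
    rw [← ofReal_norm, hnorm, ENNReal.ofReal_mul hratio.le, ofReal_norm,
      ENNReal.mul_rpow_of_ne_top ENNReal.ofReal_ne_top enorm_ne_top,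
      ENNReal.ofReal_rpow_of_pos hratio]
  have hconst : d ^ Module.finrank ℝ E * (t / d) ^ p = t ^ p * d ^ (Module.finrank ℝ E - p) := by
    rw [Real.div_rpow hg.1.le hf.1.le, Real.rpow_sub hf.1, Real.rpow_natCast]
    ring
  rw [hf.setLIntegral_image hS, setLIntegral_congr_fun_ae hS hpoint,
    lintegral_const_mul' _ _ ENNReal.ofReal_ne_top, ← mul_assoc,
    ← ENNReal.ofReal_mul (pow_nonneg hf.1.le _), hconst]

end Volume

section Hutchinson

/-- The Hutchinson operator `S ↦ ⋃ i, f i '' S` of a family of maps; its iterates at `Q` are the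
unions of the cylinder sets `f_σ(Q)` over all words `σ` of a given length. -/
def hutchinson {X ι : Type*} (f : ι → X → X) (S : Set X) : Set X :=
  ⋃ i, f i '' S

variable {X ι : Type*} {f : ι → X → X} {S T Q : Set X}

theorem hutchinson_mono : Monotone (hutchinson f) :=
  fun _ _ h => iUnion_mono fun _ => image_mono h

theorem hutchinson_sdiff_subset : hutchinson f S \ hutchinson f T ⊆ hutchinson f (S \ T) := by
  rintro x ⟨hxS, hxT⟩
  obtain ⟨i, y, hy, rfl⟩ := mem_iUnion.1 hxS
  exact mem_iUnion.2 ⟨i, y, ⟨hy, fun hyT => hxT (mem_iUnion.2 ⟨i, y, hyT, rfl⟩)⟩, rfl⟩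

theorem antitone_iterate_hutchinson (hQ : hutchinson f Q ⊆ Q) :
    Antitone fun k => (hutchinson f)^[k] Q :=
  hutchinson_mono.antitone_iterate_of_map_le hQ

theorem StrongSeparation.hutchinson_closure_subset {X : Type*} [MetricSpace X] {f : ι → X → X}
    {Q : Set X} (h : StrongSeparation f Q) : hutchinson f (closure Q) ⊆ Q :=
  iUnion_subset h.1

theorem StrongSeparation.hutchinson_subset {X : Type*} [MetricSpace X] {f : ι → X → X}
    {Q : Set X} (h : StrongSeparation f Q) : hutchinson f Q ⊆ Q :=
  (hutchinson_mono subset_closure).trans h.hutchinson_closure_subset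

variable [MeasurableSpace X] {ν : Measure X}

theorem measurableSet_iterate_hutchinson [Countable ι] (hf : ∀ i, MeasurableEmbedding (f i))
    (hQ : MeasurableSet Q) (k : ℕ) : MeasurableSet ((hutchinson f)^[k] Q) := by
  induction k with
  | zero => exact hQ
  | succ k ih =>
    rw [Function.iterate_succ_apply']
    exact .iUnion fun i => (hf i).measurableSet_image' ih

theorem measure_hutchinson_le [Fintype ι] {c : ℝ≥0∞} (h : ∀ i, ν (f i '' S) ≤ c * ν S) :
    ν (hutchinson f S) ≤ Fintype.card ι * c * ν S :=
  calc ν (hutchinson f S) ≤ ∑ i, ν (f i '' S) := measure_iUnion_fintype_le ν _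
    _ ≤ ∑ _i : ι, c * ν S := Finset.sum_le_sum fun i _ => h i
    _ = Fintype.card ι * c * ν S := by
      rw [Finset.sum_const, Finset.card_univ, nsmul_eq_mul, mul_assoc]

end Hutchinson

section Rings

variable {X : Type*} [MeasurableSpace X] {ν : Measure X}

theorem measure_le_tsum_sdiff_succ {s : ℕ → Set X} (hs : ν (⋂ k, s k) = 0) :
    ν (s 0) ≤ ∑' k, ν (s k \ s (k + 1)) := by
  have hcover : s 0 ⊆ (⋃ k, s k \ s (k + 1)) ∪ ⋂ k, s k := by
    intro x hx
    by_contra hmem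
    rw [mem_union, not_or] at hmem
    have hstep (k : ℕ) (hk : x ∈ s k) : x ∈ s (k + 1) :=
      by_contra fun hk' => hmem.1 (mem_iUnion.2 ⟨k, hk, hk'⟩)
    exact hmem.2 (mem_iInter.2 fun k => Nat.rec hx hstep k)
  calc ν (s 0) ≤ ν (⋃ k, s k \ s (k + 1)) + ν (⋂ k, s k) :=
        (measure_mono hcover).trans (measure_union_le _ _)
    _ ≤ ∑' k, ν (s k \ s (k + 1)) := by
        rw [hs, add_zero]
        exact measure_iUnion_le _

variable {ι : Type*} {f : ι → X → X} {Q T : Set X} {q : ℝ≥0∞}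

theorem measure_iterate_hutchinson_sdiff_le (hfQ : hutchinson f Q ⊆ Q)
    (hmeas : ∀ k, MeasurableSet ((hutchinson f)^[k] Q))
    (hq : ∀ S ⊆ Q, MeasurableSet S → ν (hutchinson f S) ≤ q * ν S) (k : ℕ) :
    ν ((hutchinson f)^[k] Q \ (hutchinson f)^[k + 1] Q) ≤ q ^ k * ν (Q \ hutchinson f Q) := by
  induction k with
  | zero => simp
  | succ k ih =>
    have hsub : (hutchinson f)^[k] Q \ (hutchinson f)^[k + 1] Q ⊆ Q :=
      sdiff_subset.trans (antitone_iterate_hutchinson hfQ (Nat.zero_le k))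
    calc ν ((hutchinson f)^[k + 1] Q \ (hutchinson f)^[k + 2] Q)
        ≤ ν (hutchinson f ((hutchinson f)^[k] Q \ (hutchinson f)^[k + 1] Q)) := by
          simp only [Function.iterate_succ_apply' _ (_ + 1), Function.iterate_succ_apply' _ k]
          exact measure_mono hutchinson_sdiff_subset
      _ ≤ q * ν ((hutchinson f)^[k] Q \ (hutchinson f)^[k + 1] Q) :=
          hq _ hsub ((hmeas k).diff (hmeas (k + 1)))
      _ ≤ q ^ (k + 1) * ν (Q \ hutchinson f Q) := by
          rw [pow_succ', mul_assoc]
          gcongr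

theorem measure_le_mul_tsum_of_hutchinson (hfQ : hutchinson f Q ⊆ Q) (hQT : Q ⊆ T)
    (hmeas : ∀ k, MeasurableSet ((hutchinson f)^[k] Q))
    (hq : ∀ S ⊆ Q, MeasurableSet S → ν (hutchinson f S) ≤ q * ν S)
    (hnull : ν (⋂ k, (hutchinson f)^[k] Q) = 0) :
    ν T ≤ ν (T \ hutchinson f Q) * ∑' k, q ^ k := by
  set C := ν (T \ hutchinson f Q)
  have hring (k : ℕ) : ν ((hutchinson f)^[k] Q \ (hutchinson f)^[k + 1] Q) ≤ q ^ k * C :=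
    (measure_iterate_hutchinson_sdiff_le hfQ hmeas hq k).trans
      (by gcongr; exact measure_mono (sdiff_subset_sdiff_left hQT))
  have hQC : ν Q ≤ C * ∑' k, q ^ k :=
    calc ν Q ≤ ∑' k, q ^ k * C :=
          (measure_le_tsum_sdiff_succ hnull).trans (ENNReal.tsum_le_tsum hring)
      _ = C * ∑' k, q ^ k := by rw [ENNReal.tsum_mul_right, mul_comm]
  calc ν T ≤ C + ν (hutchinson f Q) := by
        rw [add_comm]
        exact (measure_le_inter_add_sdiff ν T _).trans (by gcongr; exact inter_subset_right)
    _ ≤ C + q * (C * ∑' k, q ^ k) := by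
        gcongr
        exact (hq Q subset_rfl (hmeas 0)).trans (by gcongr)
    _ = C * (1 + ∑' k, q ^ (k + 1)) := by
        simp only [pow_succ', ENNReal.tsum_mul_left]
        ring
    _ = C * ∑' k, q ^ k := by
        rw [tsum_eq_zero_add' (f := fun k => q ^ k) ENNReal.summable, pow_zero]

end Rings

section LimitSet

theorem StrongSeparation.measure_hutchinson_closure_lt {X ι : Type*} [MetricSpace X]
    [ProperSpace X] [PreconnectedSpace X] [NoncompactSpace X] [MeasurableSpace X] [BorelSpace X]
    {μ : Measure X} [IsFiniteMeasureOnCompacts μ] [μ.IsOpenPosMeasure] [Finite ι]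
    {f : ι → X → X} {Q : Set X} (hsep : StrongSeparation f Q) (hf : ∀ i, Continuous (f i))
    (hQo : IsOpen Q) (hQb : Bornology.IsBounded Q) (hne : Q.Nonempty) :
    μ (hutchinson f (closure Q)) < μ Q := by
  have hcompact : IsCompact (hutchinson f (closure Q)) :=
    isCompact_iUnion fun i => hQb.isCompact_closure.image (hf i)
  have hsub := hsep.hutchinson_closure_subset
  have hgap : (Q \ hutchinson f (closure Q)).Nonempty := by
    rw [nonempty_iff_ne_empty, Ne, sdiff_eq_empty]
    intro hQ
    have hQc : IsCompact Q := hsub.antisymm hQ ▸ hcompact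
    rcases isClopen_iff.1 ⟨hQc.isClosed, hQo⟩ with rfl | rfl
    · exact not_nonempty_empty hne
    · exact noncompact_univ X hQc
  have hpos := (hQo.sdiff hcompact.isClosed).measure_pos μ hgap
  rw [measure_sdiff hsub hcompact.measurableSet.nullMeasurableSet
    hcompact.measure_lt_top.ne] at hpos
  exact tsub_pos_iff_lt.1 hpos

variable {E ι : Type*} [NormedAddCommGroup E] [NormedSpace ℝ E] [StrictConvexSpace ℝ E]
  [FiniteDimensional ℝ E] [Nontrivial E] {d : ℝ} {f : ι → E → E} {Q : Set E}

theorem StrongSeparation.card_mul_pow_finrank_lt_one [Fintype ι] (hsep : StrongSeparation f Q)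
    (hf : ∀ i, IsSimilarityWith d (f i)) (hQo : IsOpen Q) (hQb : Bornology.IsBounded Q)
    (hne : Q.Nonempty) :
    (Fintype.card ι : ℝ≥0∞) * ENNReal.ofReal (d ^ Module.finrank ℝ E) < 1 := by
  borelize E
  let μ : Measure E := Measure.addHaar
  have hcompact : IsCompact (closure Q) := hQb.isCompact_closure
  have hcont (i : ι) : Continuous (f i) := (hf i).isClosedEmbedding.continuous
  have hmeasure : μ (hutchinson f (closure Q)) =
      Fintype.card ι * ENNReal.ofReal (d ^ Module.finrank ℝ E) * μ (closure Q) := by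
    rw [hutchinson, measure_iUnion hsep.2 fun i => (hcompact.image (hcont i)).measurableSet]
    simp only [(hf _).measure_image hcompact.measurableSet, tsum_fintype, Finset.sum_const,
      Finset.card_univ, nsmul_eq_mul, mul_assoc]
  by_contra! hge
  have hle : μ Q ≤ μ (hutchinson f (closure Q)) :=
    calc μ Q ≤ 1 * μ (closure Q) := by rw [one_mul]; exact measure_mono subset_closure
      _ ≤ μ (hutchinson f (closure Q)) := by rw [hmeasure]; gcongr
  exact hle.not_gt (hsep.measure_hutchinson_closure_lt hcont hQo hQb hne)

theorem StrongSeparation.measure_iInter_iterate_hutchinson [Finite ι] [MeasurableSpace E]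
    [BorelSpace E] {μ : Measure E} [μ.IsAddHaarMeasure] (hsep : StrongSeparation f Q)
    (hf : ∀ i, IsSimilarityWith d (f i)) (hQo : IsOpen Q) (hQb : Bornology.IsBounded Q) :
    μ (⋂ k, (hutchinson f)^[k] Q) = 0 := by
  rcases Q.eq_empty_or_nonempty with rfl | hne
  · exact measure_mono_null (iInter_subset _ 0) measure_empty
  have := Fintype.ofFinite ι
  set ρ : ℝ≥0∞ := Fintype.card ι * ENNReal.ofReal (d ^ Module.finrank ℝ E)
  have hρ : ρ < 1 := hsep.card_mul_pow_finrank_lt_one hf hQo hQb hne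
  have hmeas (k : ℕ) : MeasurableSet ((hutchinson f)^[k] Q) := measurableSet_iterate_hutchinson
    (fun i => (hf i).isClosedEmbedding.measurableEmbedding) hQo.measurableSet k
  have hdecay (k : ℕ) : μ ((hutchinson f)^[k] Q) ≤ ρ ^ k * μ Q := by
    induction k with
    | zero => simp
    | succ k ih =>
      rw [Function.iterate_succ_apply', pow_succ', mul_assoc]
      exact (measure_hutchinson_le fun i => ((hf i).measure_image (hmeas k)).le).trans
        (by gcongr)
  have hlim : Tendsto (fun k => ρ ^ k * μ Q) atTop (𝓝 0) := by
    simpa using ENNReal.Tendsto.mul_const (ENNReal.tendsto_pow_atTop_nhds_zero_of_lt_one hρ)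
      (.inr hQb.measure_lt_top.ne)
  exact nonpos_iff_eq_zero.1
    (ge_of_tendsto' hlim fun k => (measure_mono (iInter_subset _ k)).trans (hdecay k))

end LimitSet

theorem ofReal_norm_rpow {G : Type*} [SeminormedAddGroup G] {p : ℝ} (hp : 0 ≤ p) (a : G) :
    ENNReal.ofReal (‖a‖ ^ p) = ‖a‖ₑ ^ p := by
  rw [← ENNReal.ofReal_rpow_of_nonneg (norm_nonneg a) hp, ofReal_norm]

section GeneratedMap

variable {E F ι : Type*} [NormedAddCommGroup E] [NormedSpace ℝ E] [StrictConvexSpace ℝ E]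
  [FiniteDimensional ℝ E] [Nontrivial E] [MeasurableSpace E] [BorelSpace E] {μ : Measure E}
  [μ.IsAddHaarMeasure] [NormedAddCommGroup F] [NormedSpace ℝ F] [StrictConvexSpace ℝ F]
  [Fintype ι] {d t : ℝ} {f : ι → E → E} {g : ι → F → F} {Φ : E → F} {Q : Set E}

theorem setLIntegral_closure_enorm_fderiv_rpow_le (hf : ∀ i, IsSimilarityWith d (f i))
    (hg : ∀ i, IsSimilarityWith t (g i)) (hQo : IsOpen Q) (hQb : Bornology.IsBounded Q)
    (hsep : StrongSeparation f Q) (hΦ : ∀ᵐ x ∂μ, DifferentiableAt ℝ Φ x)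
    (hconj : ∀ i, ∀ x ∈ Q, Φ (f i x) = g i (Φ x)) (p : ℝ) :
    ∫⁻ x in closure Q, ‖fderiv ℝ Φ x‖ₑ ^ p ∂μ ≤
      (∫⁻ x in closure Q \ ⋃ i, f i '' Q, ‖fderiv ℝ Φ x‖ₑ ^ p ∂μ) *
        ∑' l : ℕ, ENNReal.ofReal (Fintype.card ι * t ^ p * d ^ (Module.finrank ℝ E - p)) ^ l := by
  have hemb (i : ι) : MeasurableEmbedding (f i) := (hf i).isClosedEmbedding.measurableEmbedding
  have hmeas (k : ℕ) : MeasurableSet ((hutchinson f)^[k] Q) :=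
    measurableSet_iterate_hutchinson hemb hQo.measurableSet k
  have hring : MeasurableSet (closure Q \ hutchinson f Q) := measurableSet_closure.diff (hmeas 1)
  let ν : Measure E := μ.withDensity fun x => ‖fderiv ℝ Φ x‖ₑ ^ p
  have hscale (S : Set E) (hSQ : S ⊆ Q) (hS : MeasurableSet S) : ν (hutchinson f S) ≤
      ENNReal.ofReal (Fintype.card ι * t ^ p * d ^ (Module.finrank ℝ E - p)) * ν S := by
    rw [mul_assoc, ENNReal.ofReal_mul (Nat.cast_nonneg _), ENNReal.ofReal_natCast]
    refine measure_hutchinson_le fun i => ?_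
    rw [withDensity_apply _ ((hemb i).measurableSet_image' hS), withDensity_apply _ hS]
    exact (setLIntegral_image_enorm_fderiv_rpow (hf i) (hg i) hQo (hconj i) hΦ p hS hSQ).le
  have hnull : ν (⋂ k, (hutchinson f)^[k] Q) = 0 :=
    withDensity_absolutelyContinuous μ _ (hsep.measure_iInter_iterate_hutchinson hf hQo hQb)
  have hle := measure_le_mul_tsum_of_hutchinson hsep.hutchinson_subset subset_closure hmeas
    hscale hnull
  rwa [withDensity_apply _ measurableSet_closure, withDensity_apply _ hring] at hle

theorem generated_map_sobolev_integrability_general (hd : 0 < d) (ht : 0 < t)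
    (hf : ∀ i, IsSimilarityWith d (f i)) (hg : ∀ i, IsSimilarityWith t (g i)) (hQo : IsOpen Q)
    (hQb : Bornology.IsBounded Q) (hsep : StrongSeparation f Q)
    (hΦ : ∀ᵐ x ∂μ, DifferentiableAt ℝ Φ x) (hconj : ∀ i, ∀ x ∈ Q, Φ (f i x) = g i (Φ x)) (p : ℝ)
    (C : ℝ≥0∞) (hC : C = ∫⁻ x in closure Q \ ⋃ i, f i '' Q, ‖fderiv ℝ Φ x‖ₑ ^ p ∂μ) (hC_fin : C < ⊤)
    (hq : Fintype.card ι * t ^ p * d ^ (Module.finrank ℝ E - p) < 1) :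
    (∫⁻ x in closure Q, ‖fderiv ℝ Φ x‖ₑ ^ p ∂μ) ≤ C *
        ∑' l : ℕ, ENNReal.ofReal (Fintype.card ι * t ^ p * d ^ (Module.finrank ℝ E - p)) ^ l ∧
    C * ∑' l : ℕ, ENNReal.ofReal (Fintype.card ι * t ^ p * d ^ (Module.finrank ℝ E - p)) ^ l =
        C / ENNReal.ofReal (1 - Fintype.card ι * t ^ p * d ^ (Module.finrank ℝ E - p)) ∧
    (∫⁻ x in closure Q, ‖fderiv ℝ Φ x‖ₑ ^ p ∂μ) < ⊤ := by
  have hle := setLIntegral_closure_enorm_fderiv_rpow_le hf hg hQo hQb hsep hΦ hconj p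
  rw [← hC] at hle
  have hsum : C * ∑' l : ℕ,
      ENNReal.ofReal (Fintype.card ι * t ^ p * d ^ (Module.finrank ℝ E - p)) ^ l =
      C / ENNReal.ofReal (1 - Fintype.card ι * t ^ p * d ^ (Module.finrank ℝ E - p)) := by
    rw [ENNReal.tsum_geometric, ENNReal.ofReal_sub _ (by positivity), ENNReal.ofReal_one,
      div_eq_mul_inv]
  refine ⟨hle, hsum, hle.trans_lt ?_⟩
  rw [hsum]
  exact ENNReal.div_lt_top hC_fin.ne (ENNReal.ofReal_pos.2 (sub_pos.2 hq)).ne'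

end GeneratedMap

/-- **Sobolev integrability of the generated map.** Let `n ≥ 2`, `p > n`, let `{f i}` be
contracting similarities of ratio `d` with the strong separation condition on a bounded
open set `Q`, let `{g i}` be similarities of ratio `t`, and let `Φ : ℝⁿ → ℝⁿ` be an almost
everywhere differentiable homeomorphism with `Φ ∘ fᵢ = gᵢ ∘ Φ` on `closure Q`. If
`C = ∫_{closure Q \ ⋃ᵢ fᵢ(Q)} ‖DΦ‖ᵖ < ∞` and `N tᵖ d^{n-p} < 1`, then
`∫_{closure Q} ‖DΦ‖ᵖ ≤ C ∑ₗ (N tᵖ d^{n-p})ˡ = C / (1 - N tᵖ d^{n-p}) < ∞`. -/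
theorem generated_map_sobolev_integrability
    (n : ℕ) (hn : 2 ≤ n) (p : ℝ) (hp : (n : ℝ) < p) (N : ℕ)
    (f g : Fin N → EuclideanSpace ℝ (Fin n) → EuclideanSpace ℝ (Fin n))
    (d t : ℝ) (hd₀ : 0 < d) (hd₁ : d < 1) (ht₀ : 0 < t) (ht₁ : t < 1)
    (hf : ∀ i, IsSimilarityWith d (f i)) (hg : ∀ i, IsSimilarityWith t (g i))
    (Q : Set (EuclideanSpace ℝ (Fin n)))
    (hQo : IsOpen Q) (hQb : Bornology.IsBounded Q)
    (hsep : StrongSeparation f Q)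
    (Φ : EuclideanSpace ℝ (Fin n) → EuclideanSpace ℝ (Fin n))
    (hΦ : IsHomeomorph Φ)
    (hΦ_diff : ∀ᵐ x, DifferentiableAt ℝ Φ x)
    (hΦ_comm : ∀ i, ∀ x ∈ closure Q, Φ (f i x) = g i (Φ x))
    (C : ℝ≥0∞)
    (hC : C = ∫⁻ x in closure Q \ ⋃ i, f i '' Q, ENNReal.ofReal (‖fderiv ℝ Φ x‖ ^ p))
    (hC_fin : C < ⊤)
    (hq : (N : ℝ) * t ^ p * d ^ ((n : ℝ) - p) < 1) :
    (∫⁻ x in closure Q, ENNReal.ofReal (‖fderiv ℝ Φ x‖ ^ p)) ≤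
        C * ∑' l : ℕ, (ENNReal.ofReal ((N : ℝ) * t ^ p * d ^ ((n : ℝ) - p))) ^ l ∧
    C * ∑' l : ℕ, (ENNReal.ofReal ((N : ℝ) * t ^ p * d ^ ((n : ℝ) - p))) ^ l =
        C / ENNReal.ofReal (1 - (N : ℝ) * t ^ p * d ^ ((n : ℝ) - p)) ∧
    (∫⁻ x in closure Q, ENNReal.ofReal (‖fderiv ℝ Φ x‖ ^ p)) < ⊤ := by
  have : Nontrivial (Fin n) := Fin.nontrivial_iff_two_le.2 hn
  simp only [ofReal_norm_rpow (n.cast_nonneg.trans hp.le)] at hC ⊢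
  simpa using generated_map_sobolev_integrability_general hd₀ ht₀ hf hg hQo hQb hsep hΦ_diff
    (fun i x hx => hΦ_comm i x (subset_closure hx)) p C hC hC_fin (by simpa using hq)
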